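/- Let u be a nonnegative C¹ solution of div A(x,Du) + b(x)|Du|^α ≥ q(x)g(u) in ℝⁿ and let 0 < r₁ < r₂ be real numbers with M(r₁;u) = M(r₂;u) > 0. Then ess inf_{r₁<|x|<r₂} q(x) = 0. -/

import Mathlib

open MeasureTheory Metric Set Filter
open scoped RealInnerProductSpace ENNReal

noncomputable section

abbrev Euc (n : ℕ) := EuclideanSpace ℝ (Fin n)

/-- Weak solution of `div A(x,Dv) + b(x)|Dv|^α ≥ a(x)` on an open set `U`:
for every nonnegative test function `φ ∈ C₀^∞(U)`,
`-∫ A(x,Dv)·Dφ + ∫ b |Dv|^α φ ≥ ∫ a φ`. -/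
def IsWeakSol {n : ℕ} (A : Euc n → Euc n → Euc n) (b : Euc n → ℝ) (α : ℝ)
    (a : Euc n → ℝ) (U : Set (Euc n)) (v : Euc n → ℝ) : Prop :=
  ∀ φ : Euc n → ℝ, ContDiff ℝ (⊤ : ℕ∞) φ → HasCompactSupport φ → tsupport φ ⊆ U →
    (∀ x, 0 ≤ φ x) →
    (∫ x in U, a x * φ x) ≤
      (-(∫ x in U, ⟪A x (gradient v x), gradient φ x⟫)) +
        ∫ x in U, b x * ‖gradient v x‖ ^ α * φ x

/-- Structural conditions on `A`: measurability, coercivity and growth. -/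
def StructCond {n : ℕ} (A : Euc n → Euc n → Euc n) (p C₁ C₂ : ℝ) : Prop :=
  Measurable (Function.uncurry A) ∧
    ∀ x ζ : Euc n, C₁ * ‖ζ‖ ^ p ≤ ⟪ζ, A x ζ⟫ ∧ ‖A x ζ‖ ≤ C₂ * ‖ζ‖ ^ (p - 1)

/-- Locally bounded function on `ℝⁿ`. -/
def LocBdd {n : ℕ} (b : Euc n → ℝ) : Prop :=
  ∀ K : Set (Euc n), IsCompact K → ∃ C, ∀ x ∈ K, b x ≤ C

/-- `M(r; u) = max_{|x| = r} u x`. -/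
def sphMax {n : ℕ} (u : Euc n → ℝ) (r : ℝ) : ℝ := sSup (u '' Metric.sphere (0 : Euc n) r)

/-- `g_θ(t) = inf_{s ∈ (t/θ, θ t)} g s`. -/
def ginf (g : ℝ → ℝ) (θ t : ℝ) : ℝ := sInf (g '' Set.Ioo (t / θ) (θ * t))

/-- The open annulus `{x : r₁ < |x| < r₂}`. -/
def Ann (n : ℕ) (r₁ r₂ : ℝ) : Set (Euc n) := {x : Euc n | r₁ < ‖x‖ ∧ ‖x‖ < r₂}

/-- `q_σ(r) = ess inf_{r/σ < |x| < σ r} q x`. -/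
def qinf {n : ℕ} (q : Euc n → ℝ) (σ r : ℝ) : ℝ :=
  essInf q (volume.restrict (Ann n (r / σ) (σ * r)))

/-- `f_σ(r) = q_σ(r) / (1 + r q_σ(r)^{(α-p+1)/α} ess sup_{r/σ<|x|<σr} b^{(p-1)/α})`. -/
def fdef {n : ℕ} (q b : Euc n → ℝ) (p α σ r : ℝ) : ℝ :=
  qinf q σ r /
    (1 + r * qinf q σ r ^ ((α - p + 1) / α) *
      essSup (fun x => b x ^ ((p - 1) / α)) (volume.restrict (Ann n (r / σ) (σ * r))))

/-!
If a flux `A(·, ∇u)` has divergence bounded below by `-B |∇u| ^ (p - 1)`, testing with the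
square of `(u - k)⁺` and Young's inequality bounds `∫ |∇ (u - k)⁺ ^ (p + 1)|` by a constant
times the integral of `(u - k)⁺ ^ (p + 1)` over `{u > k, ∇u ≠ 0}`. This set has small measure
for `k` close to the maximum of `u`, so the Sobolev inequality forces `u ≤ k`: a weak maximum
principle. Hence `r ↦ M(r; u)` is nondecreasing, and `M(r₁; u) = M(r₂; u)` gives `u` a maximum
`m` at some `x₀` inside the annulus. There `∇u = 0`, so if `q` were essentially bounded below by
a positive constant, `div A(·, ∇u)` would be at least some `c > 0` on a ball around `x₀`.
Testing with `(u - m + ε ψ)⁺ ^ s`, where `ψ` is a cutoff equal to `1` near `x₀`, shows that the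
integral of this function is `O(ε ^ (p s))`; but `u - m = o(|x - x₀|)` makes it at least a
multiple of `ε ^ (s + n)`, a contradiction for large `s` as `ε → 0`.
-/

open scoped Topology NNReal ContDiff Gradient Convolution

/-! ### Gradients, positive-part powers and extension by zero -/

section Gradient

variable {E : Type*} [NormedAddCommGroup E] [InnerProductSpace ℝ E] [CompleteSpace E]
  {f : E → ℝ} {x : E}

lemma norm_gradient (f : E → ℝ) (x : E) : ‖∇ f x‖ = ‖fderiv ℝ f x‖ :=
  LinearIsometryEquiv.norm_map _ _

lemma continuous_gradient (hf : ContDiff ℝ 1 f) : Continuous (∇ f) :=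
  (LinearIsometryEquiv.continuous _).comp (hf.continuous_fderiv one_ne_zero)

lemma gradient_eq_zero_of_isLocalMax (h : IsLocalMax f x) : ∇ f x = 0 := by
  rw [← norm_eq_zero, norm_gradient, h.fderiv_eq_zero, norm_zero]

lemma gradient_comp_eq_smul {h : ℝ → ℝ} {h' : ℝ} (hh : HasDerivAt h h' (f x))
    (hf : DifferentiableAt ℝ f x) : ∇ (fun y => h (f y)) x = h' • ∇ f x := by
  have hcomp : fderiv ℝ (fun y => h (f y)) x = h' • fderiv ℝ f x :=
    (hh.comp_hasFDerivAt x hf.hasFDerivAt).fderiv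
  simp only [gradient, hcomp, map_smulₛₗ, conj_trivial]

lemma gradient_sub_const (f : E → ℝ) (c : ℝ) : ∇ (fun y => f y - c) = ∇ f := by
  ext1 x
  simp only [gradient, fderiv_sub_const]

end Gradient

section PosPartPow

lemma hasDerivAt_posPart_rpow {s : ℝ} (hs : 1 < s) (t : ℝ) :
    HasDerivAt (fun t : ℝ => t⁺ ^ s) (s * t⁺ ^ (s - 1)) t := by
  have hs0 : s ≠ 0 := by linarith
  have hs1 : s - 1 ≠ 0 := by linarith
  rcases lt_trichotomy t 0 with ht | rfl | ht
  · rw [posPart_of_nonpos ht.le, Real.zero_rpow hs1, mul_zero]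
    refine (hasDerivAt_const t (0 : ℝ)).congr_of_eventuallyEq ?_
    filter_upwards [Iio_mem_nhds ht] with y hy
    rw [posPart_of_nonpos (le_of_lt hy), Real.zero_rpow hs0]
  · have habs : HasDerivAt (fun t : ℝ => |t| ^ s) 0 0 := by
      simpa using hasDerivAt_abs_rpow 0 hs
    rw [posPart_zero, Real.zero_rpow hs1, mul_zero]
    rw [hasDerivAt_iff_isLittleO] at habs ⊢
    refine Asymptotics.IsBigO.trans_isLittleO (Asymptotics.IsBigO.of_bound 1 ?_) habs
    filter_upwards with y
    simp only [posPart_zero, abs_zero, Real.zero_rpow hs0, sub_zero, smul_zero, one_mul]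
    rw [Real.norm_of_nonneg (by positivity), Real.norm_of_nonneg (by positivity)]
    exact Real.rpow_le_rpow (posPart_nonneg y) (max_le (le_abs_self y) (abs_nonneg y)) (by linarith)
  · rw [posPart_of_nonneg ht.le]
    refine (Real.hasDerivAt_rpow_const (Or.inl ht.ne')).congr_of_eventuallyEq ?_
    filter_upwards [Ioi_mem_nhds ht] with y hy
    rw [posPart_of_nonneg (le_of_lt hy)]

lemma continuous_posPart_rpow {s : ℝ} (hs : 0 ≤ s) : Continuous fun t : ℝ => t⁺ ^ s :=
  continuous_posPart.rpow_const fun _ => Or.inr hs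

lemma contDiff_posPart_rpow {s : ℝ} (hs : 1 < s) : ContDiff ℝ 1 fun t : ℝ => t⁺ ^ s := by
  have hderiv : deriv (fun t : ℝ => t⁺ ^ s) = fun t => s * t⁺ ^ (s - 1) :=
    funext fun t => (hasDerivAt_posPart_rpow hs t).deriv
  refine contDiff_one_iff_deriv.2 ⟨fun t => (hasDerivAt_posPart_rpow hs t).differentiableAt, ?_⟩
  rw [hderiv]
  exact (continuous_posPart_rpow (by linarith)).const_mul s

lemma posPart_rpow_eq_zero {s t : ℝ} (hs : s ≠ 0) (ht : t ≤ 0) : t⁺ ^ s = 0 := by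
  rw [posPart_of_nonpos ht, Real.zero_rpow hs]

lemma gradient_posPart_rpow {E : Type*} [NormedAddCommGroup E] [InnerProductSpace ℝ E]
    [CompleteSpace E] {v : E → ℝ} {x : E} {s : ℝ} (hs : 1 < s) (hv : DifferentiableAt ℝ v x) :
    ∇ (fun y => (v y)⁺ ^ s) x = (s * (v x)⁺ ^ (s - 1)) • ∇ v x :=
  gradient_comp_eq_smul (hasDerivAt_posPart_rpow hs (v x)) hv

end PosPartPow

section ExtensionByZero

lemma indicator_eq_zero_of_eq_zero_diff {X : Type*} {S K : Set X} {f : X → ℝ}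
    (hf : ∀ x ∈ S \ K, f x = 0) {x : X} (hx : x ∉ K) : S.indicator f x = 0 := by
  by_cases hxS : x ∈ S
  · rw [indicator_of_mem hxS, hf x ⟨hxS, hx⟩]
  · exact indicator_of_notMem hxS f

lemma indicator_eventuallyEq_zero {X : Type*} [TopologicalSpace X] {S K : Set X} {f : X → ℝ}
    (hK : IsClosed K) (hf : ∀ x ∈ S \ K, f x = 0) {x : X} (hx : x ∉ K) :
    S.indicator f =ᶠ[𝓝 x] fun _ => 0 := by
  filter_upwards [hK.isOpen_compl.mem_nhds hx] with y hy
    using indicator_eq_zero_of_eq_zero_diff hf hy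

variable {E : Type*} [NormedAddCommGroup E] [InnerProductSpace ℝ E] {S K : Set E} {f : E → ℝ}

lemma contDiff_indicator (hS : IsOpen S) (hK : IsClosed K) (hKS : K ⊆ S)
    (hf : ∀ x ∈ S \ K, f x = 0) (hfd : ContDiff ℝ 1 f) : ContDiff ℝ 1 (S.indicator f) := by
  refine contDiff_iff_contDiffAt.2 fun x => ?_
  by_cases hx : x ∈ S
  · exact hfd.contDiffAt.congr_of_eventuallyEq
      (eqOn_indicator.eventuallyEq_of_mem (hS.mem_nhds hx))
  · exact contDiffAt_const.congr_of_eventuallyEq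
      (indicator_eventuallyEq_zero hK hf fun h => hx (hKS h))

lemma gradient_indicator [CompleteSpace E] (hS : IsOpen S) (hK : IsClosed K) (hKS : K ⊆ S)
    (hf : ∀ x ∈ S \ K, f x = 0) : ∇ (S.indicator f) = S.indicator (∇ f) := by
  ext1 x
  by_cases hx : x ∈ S
  · rw [indicator_of_mem hx]
    exact (eqOn_indicator.eventuallyEq_of_mem (hS.mem_nhds hx)).gradient_eq
  · rw [indicator_of_notMem hx,
      (indicator_eventuallyEq_zero hK hf fun h => hx (hKS h)).gradient_eq, gradient_fun_const]

end ExtensionByZero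

lemma mul_mul_rpow_sub_one_le {p B c w d : ℝ} (hp : 1 < p) (hB : 0 ≤ B) (hc : 0 < c) (hw : 0 ≤ w)
    (hd : 0 ≤ d) : B * w * d ^ (p - 1) ≤ c * d ^ p + B * (B / c) ^ (p - 1) * w ^ p := by
  have hpow : ∀ t : ℝ, 0 ≤ t → t ^ p = t * t ^ (p - 1) := fun t ht => by
    rw [← Real.rpow_one_add' ht (by linarith), add_sub_cancel]
  rcases le_or_gt (B * w) (c * d) with h | h
  · calc B * w * d ^ (p - 1) ≤ c * d * d ^ (p - 1) := by gcongr
      _ = c * d ^ p := by rw [hpow d hd]; ring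
      _ ≤ _ := le_add_of_nonneg_right (by positivity)
  · have hdw : d ≤ B / c * w := by
      rw [div_mul_eq_mul_div, le_div_iff₀ hc]; linarith
    calc B * w * d ^ (p - 1) ≤ B * w * (B / c * w) ^ (p - 1) := by gcongr
      _ = B * (B / c) ^ (p - 1) * w ^ p := by
        rw [Real.mul_rpow (by positivity) hw, hpow w hw]; ring
      _ ≤ _ := le_add_of_nonneg_left (by positivity)

/-! ### Mollification and weak divergence inequalities -/

section Mollification

variable {E : Type*} [NormedAddCommGroup E] [MeasurableSpace E] [BorelSpace E] {μ : Measure E}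
  {ι : Type*} {l : Filter ι}

lemma exists_contDiffBump_seq_rOut_tendsto_zero {X : Type*} (c : X) :
    ∃ φ : ℕ → ContDiffBump c, Tendsto (fun j => (φ j).rOut) atTop (𝓝 0) :=
  ⟨fun j => ⟨1 / ((j : ℝ) + 1) / 2, 1 / ((j : ℝ) + 1), by positivity, half_lt_self (by positivity)⟩,
    tendsto_one_div_add_atTop_nhds_zero_nat⟩

lemma tendstoUniformly_normed_convolution [NormedSpace ℝ E] [FiniteDimensional ℝ E]
    [μ.IsAddHaarMeasure] {V : Type*} [NormedAddCommGroup V] [NormedSpace ℝ V] [CompleteSpace V]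
    {φ : ι → ContDiffBump (0 : E)} (hφ : Tendsto (fun i => (φ i).rOut) l (𝓝 0)) {g : E → V}
    (hg : UniformContinuous g) :
    TendstoUniformly (fun i => (φ i).normed μ ⋆[ContinuousLinearMap.lsmul ℝ ℝ, μ] g) g l := by
  refine Metric.tendstoUniformly_iff.2 fun ε hε => ?_
  obtain ⟨δ, hδ, hgδ⟩ := Metric.uniformContinuous_iff.1 hg (ε / 2) (half_pos hε)
  filter_upwards [hφ.eventually_lt_const hδ] with i hi x
  rw [dist_comm]
  refine (ContDiffBump.dist_normed_convolution_le hg.continuous.aestronglyMeasurable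
    fun y hy => ?_).trans_lt (half_lt_self hε)
  exact (hgδ ((mem_ball.1 hy).trans hi)).le

lemma tsupport_normed_convolution_subset [NormedSpace ℝ E] [FiniteDimensional ℝ E]
    [μ.IsAddHaarMeasure] {φ : ContDiffBump (0 : E)} {f : E → ℝ} :
    tsupport (φ.normed μ ⋆[ContinuousLinearMap.lsmul ℝ ℝ, μ] f) ⊆
      cthickening φ.rOut (tsupport f) := by
  refine closure_minimal ((support_convolution_subset _).trans ?_) isClosed_cthickening
  rintro _ ⟨y, hy, z, hz, rfl⟩
  rw [φ.support_normed_eq, mem_ball_zero_iff] at hy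
  refine mem_cthickening_of_dist_le _ z _ _ (subset_tsupport f hz) ?_
  simpa using hy.le

lemma gradient_normed_convolution [InnerProductSpace ℝ E] [FiniteDimensional ℝ E]
    [μ.IsAddHaarMeasure] (φ : ContDiffBump (0 : E)) {f : E → ℝ} (hf : ContDiff ℝ 1 f)
    (hfc : HasCompactSupport f) :
    ∇ (φ.normed μ ⋆[ContinuousLinearMap.lsmul ℝ ℝ, μ] f) = fun x =>
      (InnerProductSpace.toDual ℝ E).symm
        ((φ.normed μ ⋆[ContinuousLinearMap.lsmul ℝ ℝ, μ] fderiv ℝ f) x) := by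
  ext1 x
  have hderiv := hfc.hasFDerivAt_convolution_right (μ := μ) (ContinuousLinearMap.lsmul ℝ ℝ)
    (φ.continuous_normed (μ := μ)).locallyIntegrable hf x
  rw [gradient, hderiv.fderiv]
  rfl

lemma tendsto_integral_bilin {X : Type*} [MeasurableSpace X] {ν : Measure X} {V W G : Type*}
    [NormedAddCommGroup V] [NormedSpace ℝ V] [NormedAddCommGroup W] [NormedSpace ℝ W]
    [NormedAddCommGroup G] [NormedSpace ℝ G] [l.IsCountablyGenerated] (L : V →L[ℝ] W →L[ℝ] G)
    {F : X → V} (hF : Integrable F ν) {ζ : ι → X → W} {ζ' : X → W} {C : ℝ}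
    (hζm : ∀ i, AEStronglyMeasurable (ζ i) ν) (hζ : TendstoUniformly ζ ζ' l)
    (hζ' : ∀ x, ‖ζ' x‖ ≤ C) :
    Tendsto (fun i => ∫ x, L (F x) (ζ i x) ∂ν) l (𝓝 (∫ x, L (F x) (ζ' x) ∂ν)) := by
  refine tendsto_integral_filter_of_dominated_convergence (fun x => ‖L‖ * ‖F x‖ * (C + 1))
    (Eventually.of_forall fun i => L.aestronglyMeasurable_comp₂ hF.1 (hζm i)) ?_
    ((hF.norm.const_mul _).mul_const _) (ae_of_all _ fun x =>
      ((L (F x)).continuous.tendsto _).comp (hζ.tendsto_at x))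
  filter_upwards [Metric.tendstoUniformly_iff.1 hζ 1 one_pos] with i hi
  refine ae_of_all _ fun x => (L.le_opNorm₂ _ _).trans ?_
  have hnorm : ‖ζ i x‖ ≤ C + 1 := by
    have := hi x
    rw [dist_comm, dist_eq_norm] at this
    linarith [norm_le_norm_add_norm_sub' (ζ i x) (ζ' x), hζ' x]
  gcongr

end Mollification

section WeakDivGE

variable {E : Type*} [NormedAddCommGroup E] [InnerProductSpace ℝ E] [FiniteDimensional ℝ E]
  [MeasurableSpace E] [BorelSpace E] {F : E → E} {h : E → ℝ} {U : Set E}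

/-- The integrable vector field `F` and function `h` satisfy `div F ≥ h` weakly on `U`. The
inequalities of interest take this form with flux `F = A(·, ∇u)` and all lower order terms collected
in `h`. -/
structure WeakDivGE (F : E → E) (h : E → ℝ) (U : Set E) : Prop where
  integrableOn_flux : IntegrableOn F U
  integrableOn_rhs : IntegrableOn h U
  setIntegral_le_of_smooth : ∀ φ : E → ℝ, ContDiff ℝ ∞ φ → HasCompactSupport φ → tsupport φ ⊆ U →
    (∀ x, 0 ≤ φ x) → ∫ x in U, h x * φ x ≤ -∫ x in U, ⟪F x, ∇ φ x⟫

lemma WeakDivGE.setIntegral_le_of_contDiff_one (H : WeakDivGE F h U) (hU : IsOpen U)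
    {φ : E → ℝ} (hφ : ContDiff ℝ 1 φ) (hφc : HasCompactSupport φ) (hφU : tsupport φ ⊆ U)
    (hφ0 : ∀ x, 0 ≤ φ x) :
    ∫ x in U, h x * φ x ≤ -∫ x in U, ⟪F x, ∇ φ x⟫ := by
  obtain ⟨ρ, hρ⟩ := exists_contDiffBump_seq_rOut_tendsto_zero (0 : E)
  set ψ : ℕ → E → ℝ := fun j =>
    (ρ j).normed volume ⋆[ContinuousLinearMap.lsmul ℝ ℝ, volume] φ
  have hψ : ∀ j, ContDiff ℝ ∞ (ψ j) := fun j =>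
    (ρ j).hasCompactSupport_normed.contDiff_convolution_left _ (ρ j).contDiff_normed
      hφ.continuous.locallyIntegrable
  have hψ1 : ∀ j, ContDiff ℝ 1 (ψ j) := fun j => (hψ j).of_le (by exact_mod_cast le_top)
  have hψφ : TendstoUniformly ψ φ atTop :=
    tendstoUniformly_normed_convolution hρ (hφc.uniformContinuous_of_continuous hφ.continuous)
  have hgrad : TendstoUniformly (fun j => ∇ (ψ j)) (∇ φ) atTop := by
    simp only [ψ, gradient_normed_convolution _ hφ hφc]
    exact (LinearIsometryEquiv.isometry _).uniformContinuous.comp_tendstoUniformly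
      (tendstoUniformly_normed_convolution hρ
        ((hφc.fderiv ℝ).uniformContinuous_of_continuous (hφ.continuous_fderiv one_ne_zero)))
  obtain ⟨C₀, hC₀⟩ := hφc.exists_bound_of_continuous hφ.continuous
  obtain ⟨C₁, hC₁⟩ := (hφc.fderiv ℝ).exists_bound_of_continuous (hφ.continuous_fderiv one_ne_zero)
  refine le_of_tendsto_of_tendsto
    (tendsto_integral_bilin (ContinuousLinearMap.mul ℝ ℝ) H.integrableOn_rhs
      (fun j => (hψ1 j).continuous.aestronglyMeasurable) hψφ hC₀)
    (tendsto_integral_bilin (innerSL ℝ) H.integrableOn_flux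
      (fun j => (continuous_gradient (hψ1 j)).aestronglyMeasurable) hgrad
      fun x => (norm_gradient φ x).trans_le (hC₁ x)).neg ?_
  obtain ⟨δ, hδ, hδU⟩ := hφc.isCompact.exists_cthickening_subset_open hU hφU
  filter_upwards [hρ.eventually_le_const hδ] with j hj
  refine H.setIntegral_le_of_smooth (ψ j) (hψ j) ?_ ?_ fun x =>
    integral_nonneg fun t => mul_nonneg ((ρ j).nonneg_normed _) (hφ0 _)
  · exact hφc.isCompact.cthickening.of_isClosed_subset (isClosed_tsupport _)
      tsupport_normed_convolution_subset
  · exact tsupport_normed_convolution_subset.trans ((cthickening_mono hj _).trans hδU)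

lemma WeakDivGE.setIntegral_le (H : WeakDivGE F h U) (hU : IsOpen U) {f : E → ℝ}
    (hf : ContDiff ℝ 1 f) (hf0 : ∀ x ∈ U, 0 ≤ f x) {K : Set E} (hK : IsCompact K) (hKU : K ⊆ U)
    (hfK : ∀ x ∈ U \ K, f x = 0) :
    ∫ x in U, h x * f x ≤ -∫ x in U, ⟪F x, ∇ f x⟫ := by
  have htest := H.setIntegral_le_of_contDiff_one hU
    (contDiff_indicator hU hK.isClosed hKU hfK hf)
    (HasCompactSupport.intro hK fun x => indicator_eq_zero_of_eq_zero_diff hfK)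
    ((closure_minimal (fun x hx => not_imp_comm.1 (indicator_eq_zero_of_eq_zero_diff hfK) hx)
      hK.isClosed).trans hKU) (indicator_nonneg hf0)
  rw [gradient_indicator hU hK.isClosed hKU hfK] at htest
  convert htest using 1
  · refine setIntegral_congr_fun hU.measurableSet fun x hx => ?_
    simp only [indicator_of_mem hx]
  · congr 1
    refine setIntegral_congr_fun hU.measurableSet fun x hx => ?_
    simp only [indicator_of_mem hx]

lemma WeakDivGE.setIntegral_posPart_rpow_le (H : WeakDivGE F h U) (hU : IsOpen U)
    {v : E → ℝ} (hv : ContDiff ℝ 1 v) {s : ℝ} (hs : 1 < s) {K : Set E} (hK : IsCompact K)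
    (hKU : K ⊆ U) (hvK : ∀ x ∈ U \ K, v x ≤ 0) :
    ∫ x in U, h x * (v x)⁺ ^ s ≤ -∫ x in U, s * (v x)⁺ ^ (s - 1) * ⟪F x, ∇ v x⟫ := by
  refine (H.setIntegral_le hU ((contDiff_posPart_rpow hs).comp hv)
    (fun x _ => Real.rpow_nonneg (posPart_nonneg _) s) hK hKU
    fun x hx => posPart_rpow_eq_zero (by linarith) (hvK x hx)).trans_eq ?_
  congr 1
  refine integral_congr_ae (ae_of_all _ fun x => ?_)
  simp only [Function.comp_def, gradient_posPart_rpow hs (hv.differentiable one_ne_zero x),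
    real_inner_smul_right]

end WeakDivGE

/-! ### The Sobolev inequality on sets of small measure -/

section Sobolev

variable {E : Type*} [NormedAddCommGroup E] [MeasurableSpace E] [BorelSpace E]

lemma exists_setIntegral_norm_le_integral_norm_fderiv [NormedSpace ℝ E] [FiniteDimensional ℝ E]
    (μ : Measure E) [μ.IsAddHaarMeasure] (hE : 2 ≤ Module.finrank ℝ E) :
    ∃ C θ : ℝ, 0 ≤ C ∧ 0 < θ ∧ ∀ f : E → ℝ, ContDiff ℝ 1 f → HasCompactSupport f →
      ∀ T : Set E, μ T ≠ ⊤ →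
        ∫ x in T, ‖f x‖ ∂μ ≤ C * μ.real T ^ θ * ∫ x, ‖fderiv ℝ f x‖ ∂μ := by
  set q : ℝ≥0 := NNReal.conjExponent (Module.finrank ℝ E)
  have hconj : NNReal.HolderConjugate (Module.finrank ℝ E : ℝ≥0) q :=
    NNReal.HolderConjugate.conjExponent (by exact_mod_cast (by omega : 1 < Module.finrank ℝ E))
  have hq : 1 < (q : ℝ) := by exact_mod_cast hconj.symm.lt
  refine ⟨eLpNormLESNormFDerivOneConst μ q, 1 - 1 / (q : ℝ), NNReal.coe_nonneg _, ?_,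
    fun f hf hfc T hT => ?_⟩
  · rw [sub_pos, div_lt_one (by linarith)]
    exact hq
  have hsobolev : eLpNorm f 1 (μ.restrict T) ≤
      eLpNormLESNormFDerivOneConst μ q * eLpNorm (fderiv ℝ f) 1 μ * μ T ^ (1 - 1 / (q : ℝ)) := by
    have hholder := eLpNorm_le_eLpNorm_mul_rpow_measure_univ (μ := μ.restrict T) (p := 1)
      (q := (q : ℝ≥0∞)) (by exact_mod_cast hconj.symm.lt.le) hf.continuous.aestronglyMeasurable
    simp only [Measure.restrict_apply_univ, ENNReal.toReal_one, ENNReal.coe_toReal, div_one]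
      at hholder
    refine hholder.trans (mul_le_mul_left ?_ _)
    exact (eLpNorm_mono_measure f Measure.restrict_le_self).trans
      (eLpNorm_le_eLpNorm_fderiv_one μ hf hfc hconj)
  have hfderiv : Integrable (fderiv ℝ f) μ :=
    (hf.continuous_fderiv one_ne_zero).integrable_of_hasCompactSupport (hfc.fderiv ℝ)
  rw [integral_norm_eq_lintegral_enorm hf.continuous.aestronglyMeasurable,
    integral_norm_eq_lintegral_enorm hfderiv.1, ← eLpNorm_one_eq_lintegral_enorm,
    ← eLpNorm_one_eq_lintegral_enorm, Measure.real, ENNReal.toReal_rpow]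
  refine (ENNReal.toReal_mono ?_ hsobolev).trans_eq ?_
  · exact ENNReal.mul_ne_top (ENNReal.mul_ne_top ENNReal.coe_ne_top
      (memLp_one_iff_integrable.2 hfderiv).eLpNorm_ne_top)
      (ENNReal.rpow_ne_top_of_nonneg (by rw [sub_nonneg, div_le_one] <;> linarith) hT)
  · simp only [ENNReal.toReal_mul, ENNReal.coe_toReal]
    ring

lemma exists_eq_zero_of_integral_norm_gradient_le [InnerProductSpace ℝ E] [FiniteDimensional ℝ E]
    (μ : Measure E) [μ.IsAddHaarMeasure] (hE : 2 ≤ Module.finrank ℝ E) {D : ℝ} (hD : 0 ≤ D) :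
    ∃ δ > 0, ∀ f : E → ℝ, ContDiff ℝ 1 f → HasCompactSupport f → ∀ T : Set E, μ T ≠ ⊤ →
      μ.real T < δ → ∫ x, ‖∇ f x‖ ∂μ ≤ D * ∫ x in T, ‖f x‖ ∂μ → f = 0 := by
  obtain ⟨C, θ, hC, hθ, hsobolev⟩ := exists_setIntegral_norm_le_integral_norm_fderiv μ hE
  refine ⟨(1 / (D * C + 1)) ^ (1 / θ), by positivity, fun f hf hfc T hT hTδ hle => ?_⟩
  simp only [← norm_gradient] at hsobolev
  have hsmall : D * C * μ.real T ^ θ < 1 := by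
    have hpow : μ.real T ^ θ < 1 / (D * C + 1) := by
      rw [← Real.rpow_lt_rpow_iff (by positivity) (by positivity) (one_div_pos.2 hθ),
        ← Real.rpow_mul measureReal_nonneg, mul_one_div_cancel hθ.ne', Real.rpow_one]
      exact hTδ
    rw [lt_div_iff₀ (by positivity)] at hpow
    nlinarith [Real.rpow_nonneg (measureReal_nonneg (μ := μ) (s := T)) θ]
  have hgrad : ∫ x, ‖∇ f x‖ ∂μ ≤ 0 := by
    have hself : ∫ x, ‖∇ f x‖ ∂μ ≤ D * C * μ.real T ^ θ * ∫ x, ‖∇ f x‖ ∂μ :=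
      calc _ ≤ D * ∫ x in T, ‖f x‖ ∂μ := hle
        _ ≤ D * (C * μ.real T ^ θ * ∫ x, ‖∇ f x‖ ∂μ) := by gcongr; exact hsobolev f hf hfc T hT
        _ = _ := by ring
    nlinarith
  have hint : ∫ x, ‖f x‖ ∂μ ≤ 0 := by
    rw [← setIntegral_eq_integral_of_forall_compl_eq_zero (s := tsupport f)
      fun x hx => by rw [image_eq_zero_of_notMem_tsupport hx, norm_zero]]
    exact (hsobolev f hf hfc _ hfc.isCompact.measure_lt_top.ne).trans
      (mul_nonpos_of_nonneg_of_nonpos (by positivity) hgrad)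
  by_contra hne
  obtain ⟨x, hx⟩ := Function.ne_iff.1 hne
  exact hint.not_gt (hf.continuous.norm.integral_pos_of_hasCompactSupport_nonneg_nonzero hfc.norm
    (fun y => norm_nonneg _) (norm_ne_zero_iff.2 hx))

end Sobolev

/-! ### The weak maximum principle -/

section BoundedSets

variable {E : Type*} [NormedAddCommGroup E] [ProperSpace E] [MeasurableSpace E] [BorelSpace E]
  {μ : Measure E} {S : Set E}

lemma integrableOn_of_continuous_of_isBounded [IsFiniteMeasureOnCompacts μ] {f : E → ℝ}
    (hf : Continuous f) (hS : Bornology.IsBounded S) : IntegrableOn f S μ :=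
  (hf.continuousOn.integrableOn_compact hS.isCompact_closure).mono_set subset_closure

lemma integrableOn_bilin_of_isBounded {V W : Type*} [NormedAddCommGroup V] [NormedSpace ℝ V]
    [NormedAddCommGroup W] [NormedSpace ℝ W] (L : V →L[ℝ] W →L[ℝ] ℝ) {F : E → V} {G : E → W}
    (hF : IntegrableOn F S μ) (hG : Continuous G) (hS : Bornology.IsBounded S)
    (hSm : MeasurableSet S) : IntegrableOn (fun x => L (F x) (G x)) S μ := by
  obtain ⟨C, hC⟩ := hS.isCompact_closure.exists_bound_of_continuousOn hG.continuousOn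
  refine Integrable.mono' ((hF.norm.const_mul ‖L‖).mul_const C)
    (L.aestronglyMeasurable_comp₂ hF.1 hG.aestronglyMeasurable) ?_
  filter_upwards [ae_restrict_mem hSm] with x hx
  refine (L.le_opNorm₂ _ _).trans ?_
  gcongr
  exact hC x (subset_closure hx)

end BoundedSets

section MaximumPrinciple

lemma mul_rpow_mul_le_of_coercive {p C₁ B w d ξ η : ℝ} (hp : 1 < p) (hC₁ : 0 < C₁) (hB : 0 ≤ B)
    (hw : 0 ≤ w) (hd : 0 ≤ d) (hξ : C₁ * d ^ p ≤ ξ) (hη : -(B * d ^ (p - 1)) ≤ η) :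
    C₁ * (w ^ p * d) ≤
      (C₁ + B * (B / C₁) ^ (p - 1)) * w ^ (p + 1) + (η * w ^ (2 : ℝ) + 2 * w * ξ) := by
  have hpow : ∀ t : ℝ, 0 ≤ t → t ^ p = t * t ^ (p - 1) := fun t ht => by
    rw [← Real.rpow_one_add' ht (by linarith), add_sub_cancel]
  have hyoung := mul_mul_rpow_sub_one_le hp hB hC₁ hw hd
  have hyoung' : d * w ^ (p - 1) ≤ w ^ p + d ^ p := by
    simpa using mul_mul_rpow_sub_one_le hp zero_le_one one_pos hd hw
  have hlower : 0 ≤ w ^ 2 * (η + B * d ^ (p - 1)) := mul_nonneg (sq_nonneg w) (by linarith)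
  have hflux : 0 ≤ w * (ξ - C₁ * d ^ p) := mul_nonneg hw (by linarith)
  rw [Real.rpow_add_one' hw (by linarith), Real.rpow_two]
  calc C₁ * (w ^ p * d) = C₁ * w * (d * w ^ (p - 1)) := by rw [hpow w hw]; ring
    _ ≤ C₁ * w * (w ^ p + d ^ p) := by gcongr
    _ ≤ _ := by linarith [mul_le_mul_of_nonneg_left hyoung hw]

variable {E : Type*} [NormedAddCommGroup E] [InnerProductSpace ℝ E] [FiniteDimensional ℝ E]
  {u h : E → ℝ} {F : E → E} {S K : Set E} {m k p C₁ B : ℝ}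

/-- The part of the superlevel set `{u > k}` in `S` on which `∇ u ≠ 0`. The energy estimate of the
maximum principle lives on this set, which shrinks to the empty set as `k` increases to a
maximum of `u`, even when the maximum is attained on a set of positive measure. -/
def noncriticalSuperlevel (u : E → ℝ) (S : Set E) (k : ℝ) : Set E :=
  {x ∈ S | k < u x ∧ ∇ u x ≠ 0}

lemma mul_posPart_rpow_mul_norm_gradient_le (hp : 1 < p) (hC₁ : 0 < C₁) (hB : 0 ≤ B) {x : E}
    (hx : x ∈ S) (hcoer : C₁ * ‖∇ u x‖ ^ p ≤ ⟪F x, ∇ u x⟫)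
    (hlow : -(B * ‖∇ u x‖ ^ (p - 1)) ≤ h x) :
    C₁ * ((u x - k)⁺ ^ p * ‖∇ u x‖) ≤
      (C₁ + B * (B / C₁) ^ (p - 1)) *
          (noncriticalSuperlevel u S k).indicator (fun x => (u x - k)⁺ ^ (p + 1)) x +
        (h x * (u x - k)⁺ ^ (2 : ℝ) + 2 * (u x - k)⁺ * ⟪F x, ∇ u x⟫) := by
  have hmain := mul_rpow_mul_le_of_coercive hp hC₁ hB (posPart_nonneg (u x - k))
    (norm_nonneg _) hcoer hlow
  by_cases hxT : x ∈ noncriticalSuperlevel u S k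
  · rwa [indicator_of_mem hxT]
  rw [indicator_of_notMem hxT, mul_zero, zero_add]
  by_cases hgrad : ∇ u x = 0
  · have hh : 0 ≤ h x := by
      simpa [hgrad, Real.zero_rpow (by linarith : p - 1 ≠ 0)] using hlow
    simp only [hgrad, norm_zero, mul_zero, inner_zero_right, add_zero]
    positivity
  · have hux : u x - k ≤ 0 := sub_nonpos.2 (not_lt.1 fun hk => hxT ⟨hx, hk, hgrad⟩)
    rwa [posPart_rpow_eq_zero (by linarith : p + 1 ≠ 0) hux, mul_zero, zero_add] at hmain

variable [MeasurableSpace E] [BorelSpace E]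

lemma measurableSet_noncriticalSuperlevel (hu : ContDiff ℝ 1 u) (hS : MeasurableSet S) (k : ℝ) :
    MeasurableSet (noncriticalSuperlevel u S k) :=
  hS.inter ((isOpen_lt continuous_const hu.continuous).inter
    (isOpen_ne_fun (continuous_gradient hu) continuous_const)).measurableSet

lemma exists_measure_noncriticalSuperlevel_lt {μ : Measure E} (hu : ContDiff ℝ 1 u)
    (hS : IsOpen S) (hSμ : μ S ≠ ⊤) {z : E} (hz : IsMaxOn u S z) (hm : m < u z) {δ : ℝ}
    (hδ : 0 < δ) : ∃ k ∈ Ioo m (u z), μ.real (noncriticalSuperlevel u S k) < δ := by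
  obtain ⟨k, hk, hkm, hkz⟩ := exists_seq_strictMono_tendsto' hm
  have hempty : ⋂ j, noncriticalSuperlevel u S (k j) = ∅ := by
    refine eq_empty_of_forall_notMem fun x hx => ?_
    have hxj := mem_iInter.1 hx
    have hzx : u z ≤ u x := le_of_tendsto' hkz fun j => (hxj j).2.1.le
    have hmax : IsLocalMax u x := by
      filter_upwards [hS.mem_nhds (hxj 0).1] with y hy using (hz hy).trans hzx
    exact (hxj 0).2.2 (gradient_eq_zero_of_isLocalMax hmax)
  have hlim := tendsto_measure_iInter_atTop (μ := μ)
    (fun j => (measurableSet_noncriticalSuperlevel hu hS.measurableSet (k j)).nullMeasurableSet)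
    (fun i j hij x hx => ⟨hx.1, (hk.monotone hij).trans_lt hx.2.1, hx.2.2⟩)
    ⟨0, measure_ne_top_of_subset (sep_subset _ _) hSμ⟩
  rw [hempty, measure_empty] at hlim
  obtain ⟨j, hj⟩ := (hlim.eventually_lt_const (ENNReal.ofReal_pos.2 hδ)).exists
  exact ⟨k j, hkm j, ENNReal.toReal_lt_of_lt_ofReal hj⟩

lemma WeakDivGE.setIntegral_rpow_mul_norm_gradient_le (H : WeakDivGE F h S) (hS : IsOpen S)
    (hSb : Bornology.IsBounded S) (hu : ContDiff ℝ 1 u) (hp : 1 < p) (hC₁ : 0 < C₁) (hB : 0 ≤ B)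
    (hcoer : ∀ x ∈ S, C₁ * ‖∇ u x‖ ^ p ≤ ⟪F x, ∇ u x⟫)
    (hlow : ∀ x ∈ S, -(B * ‖∇ u x‖ ^ (p - 1)) ≤ h x) (hK : IsCompact K)
    (hKS : K ⊆ S) (huK : ∀ x ∈ S \ K, u x ≤ k) :
    C₁ * ∫ x in S, (u x - k)⁺ ^ p * ‖∇ u x‖ ≤
      (C₁ + B * (B / C₁) ^ (p - 1)) *
        ∫ x in noncriticalSuperlevel u S k, (u x - k)⁺ ^ (p + 1) := by
  set T := noncriticalSuperlevel u S k
  have hT : MeasurableSet T := measurableSet_noncriticalSuperlevel hu hS.measurableSet k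
  have hST : S ∩ T = T := inter_eq_self_of_subset_right (sep_subset _ _)
  have hv : ContDiff ℝ 1 fun x => u x - k := hu.sub contDiff_const
  have hcont : ∀ s : ℝ, 0 ≤ s → Continuous fun x => (u x - k)⁺ ^ s := fun s hs =>
    (continuous_posPart_rpow hs).comp hv.continuous
  have hint : IntegrableOn (fun x => (u x - k)⁺ ^ p * ‖∇ u x‖) S :=
    integrableOn_of_continuous_of_isBounded
      ((hcont p (by linarith)).mul (continuous_gradient hu).norm) hSb
  have hintT : IntegrableOn (T.indicator fun x => (u x - k)⁺ ^ (p + 1)) S :=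
    (integrableOn_of_continuous_of_isBounded (hcont _ (by linarith)) hSb).indicator hT
  have hinth : IntegrableOn (fun x => h x * (u x - k)⁺ ^ (2 : ℝ)) S :=
    integrableOn_bilin_of_isBounded (ContinuousLinearMap.mul ℝ ℝ) H.integrableOn_rhs
      (hcont 2 zero_le_two) hSb hS.measurableSet
  have hintF : IntegrableOn (fun x => 2 * (u x - k)⁺ * ⟪F x, ∇ u x⟫) S :=
    (integrableOn_bilin_of_isBounded (innerSL ℝ) H.integrableOn_flux
      (((continuous_posPart.comp hv.continuous).const_mul 2).smul (continuous_gradient hu)) hSb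
      hS.measurableSet).congr (ae_of_all _ fun x => real_inner_smul_right _ _ _)
  have hsum : IntegrableOn
      (fun x => h x * (u x - k)⁺ ^ (2 : ℝ) + 2 * (u x - k)⁺ * ⟪F x, ∇ u x⟫) S := hinth.add hintF
  have htest := H.setIntegral_posPart_rpow_le hS hv one_lt_two hK hKS
    fun x hx => sub_nonpos.2 (huK x hx)
  simp only [gradient_sub_const, show (2 : ℝ) - 1 = 1 by norm_num, Real.rpow_one] at htest
  have hmono := setIntegral_mono_on (hint.const_mul C₁)
    ((hintT.const_mul _).add hsum) hS.measurableSet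
    fun x hx => mul_posPart_rpow_mul_norm_gradient_le hp hC₁ hB hx (hcoer x hx) (hlow x hx)
  simp only [Pi.add_apply] at hmono
  rw [integral_const_mul, integral_add (hintT.const_mul _) hsum,
    integral_const_mul, integral_add hinth hintF, setIntegral_indicator hT, hST] at hmono
  linarith

lemma WeakDivGE.integral_norm_gradient_indicator_le (H : WeakDivGE F h S) (hS : IsOpen S)
    (hSb : Bornology.IsBounded S) (hu : ContDiff ℝ 1 u) (hp : 1 < p) (hC₁ : 0 < C₁) (hB : 0 ≤ B)
    (hcoer : ∀ x ∈ S, C₁ * ‖∇ u x‖ ^ p ≤ ⟪F x, ∇ u x⟫)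
    (hlow : ∀ x ∈ S, -(B * ‖∇ u x‖ ^ (p - 1)) ≤ h x) (hK : IsCompact K) (hKS : K ⊆ S)
    (huK : ∀ x ∈ S \ K, u x ≤ k) :
    ∫ x, ‖∇ (S.indicator fun y => (u y - k)⁺ ^ (p + 1)) x‖ ≤
      (p + 1) * ((C₁ + B * (B / C₁) ^ (p - 1)) / C₁) *
        ∫ x in noncriticalSuperlevel u S k, ‖S.indicator (fun y => (u y - k)⁺ ^ (p + 1)) x‖ := by
  have hgrad : ∫ x, ‖∇ (S.indicator fun y => (u y - k)⁺ ^ (p + 1)) x‖ =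
      (p + 1) * ∫ x in S, (u x - k)⁺ ^ p * ‖∇ u x‖ := by
    rw [gradient_indicator hS hK.isClosed hKS fun x hx =>
      posPart_rpow_eq_zero (by linarith) (sub_nonpos.2 (huK x hx)), ← integral_const_mul]
    simp only [norm_indicator_eq_indicator_norm]
    rw [integral_indicator hS.measurableSet]
    refine setIntegral_congr_fun hS.measurableSet fun x _ => ?_
    have hux := (hu.sub (contDiff_const (c := k))).differentiable one_ne_zero x
    simp only [gradient_posPart_rpow (by linarith : 1 < p + 1) hux, gradient_sub_const, norm_smul,
      add_sub_cancel_right]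
    rw [Real.norm_of_nonneg (by positivity), mul_assoc]
  have hnorm : ∫ x in noncriticalSuperlevel u S k, ‖S.indicator (fun y => (u y - k)⁺ ^ (p + 1)) x‖ =
      ∫ x in noncriticalSuperlevel u S k, (u x - k)⁺ ^ (p + 1) := by
    refine setIntegral_congr_fun (measurableSet_noncriticalSuperlevel hu hS.measurableSet k)
      fun x hx => ?_
    simp only [indicator_of_mem hx.1]
    exact Real.norm_of_nonneg (by positivity)
  have henergy := H.setIntegral_rpow_mul_norm_gradient_le hS hSb hu hp hC₁ hB hcoer hlow hK hKS huK
  rw [← le_div_iff₀' hC₁] at henergy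
  rw [hgrad, hnorm, mul_assoc]
  refine mul_le_mul_of_nonneg_left (henergy.trans_eq ?_) (by linarith)
  ring

theorem WeakDivGE.le_of_forall_frontier_le (H : WeakDivGE F h S) (hE : 2 ≤ Module.finrank ℝ E)
    (hS : IsOpen S) (hSb : Bornology.IsBounded S)
    (hu : ContDiff ℝ 1 u) (hp : 1 < p) (hC₁ : 0 < C₁) (hB : 0 ≤ B)
    (hcoer : ∀ x ∈ S, C₁ * ‖∇ u x‖ ^ p ≤ ⟪F x, ∇ u x⟫)
    (hlow : ∀ x ∈ S, -(B * ‖∇ u x‖ ^ (p - 1)) ≤ h x) (hm : ∀ x ∈ frontier S, u x ≤ m) {x : E}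
    (hx : x ∈ S) : u x ≤ m := by
  by_contra! hmx
  obtain ⟨z, hzS, hz⟩ := hSb.isCompact_closure.exists_isMaxOn ⟨x, subset_closure hx⟩
    hu.continuous.continuousOn
  have hmz : m < u z := hmx.trans_le (hz (subset_closure hx))
  have hmem : ∀ y ∈ closure S, m < u y → y ∈ S := fun y hy hmy => by
    by_contra hyS
    exact hmy.not_ge (hm y (hS.frontier_eq ▸ ⟨hy, hyS⟩))
  obtain ⟨δ, hδ, hvanish⟩ := exists_eq_zero_of_integral_norm_gradient_le (volume : Measure E) hE
    (D := (p + 1) * ((C₁ + B * (B / C₁) ^ (p - 1)) / C₁)) (by positivity)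
  obtain ⟨k, ⟨hmk, hkz⟩, hT⟩ := exists_measure_noncriticalSuperlevel_lt (μ := volume) hu hS
    hSb.measure_lt_top.ne (hz.on_subset subset_closure) hmz hδ
  set T := noncriticalSuperlevel u S k
  set f : E → ℝ := fun x => (u x - k)⁺ ^ (p + 1)
  have hK : IsCompact (closure S ∩ {y | k ≤ u y}) :=
    hSb.isCompact_closure.inter_right (isClosed_le continuous_const hu.continuous)
  have hKS : closure S ∩ {y | k ≤ u y} ⊆ S := fun y hy => hmem y hy.1 (hmk.trans_le hy.2)
  have hle : ∀ y ∈ S \ (closure S ∩ {y | k ≤ u y}), u y ≤ k := fun y hy =>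
    (not_le.1 fun hky => hy.2 ⟨subset_closure hy.1, hky⟩).le
  have hf0 : ∀ y ∈ S \ (closure S ∩ {y | k ≤ u y}), f y = 0 := fun y hy =>
    posPart_rpow_eq_zero (by linarith) (sub_nonpos.2 (hle y hy))
  have hzero := hvanish (S.indicator f)
    (contDiff_indicator hS hK.isClosed hKS hf0
      ((contDiff_posPart_rpow (by linarith)).comp (hu.sub contDiff_const)))
    (HasCompactSupport.intro hK fun y => indicator_eq_zero_of_eq_zero_diff hf0) T
    (measure_ne_top_of_subset (sep_subset _ _) hSb.measure_lt_top.ne) hT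
    (H.integral_norm_gradient_indicator_le hS hSb hu hp hC₁ hB hcoer hlow hK hKS hle)
  have hfz : f z = 0 := by
    rw [← indicator_of_mem (hmem z hzS hmz) f, hzero, Pi.zero_apply]
  exact (Real.rpow_pos_of_pos (posPart_pos (sub_pos.2 hkz)) (p + 1)).ne' hfz

end MaximumPrinciple

/-! ### No interior maximum where the divergence is positive -/

section NoInteriorMax

lemma not_eventually_mul_rpow_le {c a b : ℝ} (hc : 0 < c) (hab : a < b) (C : ℝ) :
    ¬∀ᶠ ε : ℝ in 𝓝[>] 0, c * ε ^ a ≤ C * ε ^ b := by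
  intro hle
  have hlim : Tendsto (fun ε : ℝ => C * ε ^ (b - a)) (𝓝[>] 0) (𝓝 0) := by
    have hcont := (Real.continuousAt_rpow_const 0 (b - a) (Or.inr (by linarith))).const_mul C
    simpa [ContinuousAt, Real.zero_rpow (sub_ne_zero.2 hab.ne')] using
      hcont.tendsto.mono_left nhdsWithin_le_nhds
  obtain ⟨ε, ⟨hle, hlt⟩, hε⟩ :=
    ((hle.and (hlim.eventually_lt_const hc)).and self_mem_nhdsWithin).exists
  have hε : 0 < ε := hε
  refine hlt.not_ge (le_of_mul_le_mul_right ?_ (Real.rpow_pos_of_pos hε a))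
  rwa [mul_assoc, ← Real.rpow_add hε, sub_add_cancel]

lemma integral_rpow_le_of_le_mul_integral_rpow_sub_one {X : Type*} [MeasurableSpace X]
    {μ : Measure X} [IsFiniteMeasure μ] {w : X → ℝ} {s δ : ℝ} (hs : 1 < s) (hδ : 0 ≤ δ)
    (hw : ∀ x, 0 ≤ w x) (hint : Integrable (fun x => w x ^ s) μ)
    (hint' : Integrable (fun x => w x ^ (s - 1)) μ)
    (h : ∫ x, w x ^ s ∂μ ≤ δ * ∫ x, w x ^ (s - 1) ∂μ) :
    ∫ x, w x ^ s ∂μ ≤ (2 * δ) ^ s * μ.real univ := by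
  have hyoung : δ * ∫ x, w x ^ (s - 1) ∂μ ≤
      ∫ x, (1 / 2 * w x ^ s + δ * (2 * δ) ^ (s - 1)) ∂μ := by
    rw [← integral_const_mul]
    refine integral_mono (hint'.const_mul δ) ((hint.const_mul _).add (integrable_const _))
      fun x => ?_
    simpa [div_eq_mul_inv, mul_comm δ 2] using
      mul_mul_rpow_sub_one_le hs hδ one_half_pos zero_le_one (hw x)
  rw [integral_add (hint.const_mul _) (integrable_const _), integral_const_mul, integral_const,
    smul_eq_mul] at hyoung
  calc ∫ x, w x ^ s ∂μ ≤ 2 * δ * (2 * δ) ^ (s - 1) * μ.real univ := by linarith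
    _ = (2 * δ) ^ s * μ.real univ := by
      rw [← Real.rpow_one_add' (by positivity) (by linarith), add_sub_cancel]

variable {E : Type*} [NormedAddCommGroup E] [InnerProductSpace ℝ E]
  {u h ψ : E → ℝ} {F : E → E} {S : Set E} {x₀ : E} {m p C₁ C₂ L c s ε : ℝ}

lemma neg_inner_add_smul_le_of_coercive {f d z : E} (hp : 1 < p) (hC₁ : 0 < C₁) (hC₂ : 0 ≤ C₂)
    (hε : 0 ≤ ε) (hcoer : C₁ * ‖d‖ ^ p ≤ ⟪f, d⟫) (hgrowth : ‖f‖ ≤ C₂ * ‖d‖ ^ (p - 1))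
    (hz : ‖z‖ ≤ L) : -⟪f, d + ε • z⟫ ≤ C₂ * L * (C₂ * L / C₁) ^ (p - 1) * ε ^ p := by
  have hL : 0 ≤ L := (norm_nonneg z).trans hz
  have hcross : -⟪f, z⟫ ≤ C₂ * ‖d‖ ^ (p - 1) * L :=
    calc -⟪f, z⟫ ≤ ‖f‖ * ‖z‖ := (neg_le_abs _).trans (abs_real_inner_le_norm f z)
      _ ≤ C₂ * ‖d‖ ^ (p - 1) * L := by gcongr
  have hyoung := mul_mul_rpow_sub_one_le hp (mul_nonneg hC₂ hL) hC₁ hε (norm_nonneg d)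
  rw [inner_add_right, real_inner_smul_right]
  linarith [mul_le_mul_of_nonneg_left hcross hε]

variable [FiniteDimensional ℝ E]

lemma gradient_sub_const_add_const_mul (hu : DifferentiableAt ℝ u x₀)
    (hψ : DifferentiableAt ℝ ψ x₀) (m ε : ℝ) :
    ∇ (fun x => u x - m + ε * ψ x) x₀ = ∇ u x₀ + ε • ∇ ψ x₀ := by
  have hfderiv : fderiv ℝ (fun x => u x - m + ε * ψ x) x₀ = fderiv ℝ u x₀ + ε • fderiv ℝ ψ x₀ :=
    ((hu.hasFDerivAt.sub_const m).add (hψ.hasFDerivAt.const_mul ε)).fderiv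
  simp only [gradient, hfderiv, map_add, map_smulₛₗ, conj_trivial]

lemma exists_contDiff_one_eventuallyEq_one (hS : S ∈ 𝓝 x₀) :
    ∃ ψ : E → ℝ, ContDiff ℝ 1 ψ ∧ HasCompactSupport ψ ∧ tsupport ψ ⊆ S ∧ ψ =ᶠ[𝓝 x₀] 1 := by
  obtain ⟨ρ, hρ, hρS⟩ := Metric.nhds_basis_closedBall.mem_iff.1 hS
  let φ : ContDiffBump x₀ := ⟨ρ / 2, ρ, half_pos hρ, half_lt_self hρ⟩
  exact ⟨φ, φ.contDiff, φ.hasCompactSupport, φ.tsupport_eq.trans_subset hρS, φ.eventuallyEq_one⟩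

variable [MeasurableSpace E] [BorelSpace E]

lemma WeakDivGE.mul_setIntegral_posPart_rpow_le (H : WeakDivGE F h S) (hS : IsOpen S)
    (hSb : Bornology.IsBounded S) (hu : ContDiff ℝ 1 u) (hp : 1 < p) (hC₁ : 0 < C₁)
    (hC₂ : 0 ≤ C₂) (hcoer : ∀ x ∈ S, C₁ * ‖∇ u x‖ ^ p ≤ ⟪F x, ∇ u x⟫)
    (hgrowth : ∀ x ∈ S, ‖F x‖ ≤ C₂ * ‖∇ u x‖ ^ (p - 1))
    (hh : ∀ᵐ x ∂volume.restrict S, c ≤ h x) (hm : ∀ x ∈ S, u x ≤ m) (hψ : ContDiff ℝ 1 ψ)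
    (hψc : HasCompactSupport ψ) (hψS : tsupport ψ ⊆ S) (hL : ∀ x, ‖∇ ψ x‖ ≤ L) (hs : 1 < s)
    (hε : 0 ≤ ε) :
    c * ∫ x in S, (u x - m + ε * ψ x)⁺ ^ s ≤
      s * (C₂ * L * (C₂ * L / C₁) ^ (p - 1) * ε ^ p) *
        ∫ x in S, (u x - m + ε * ψ x)⁺ ^ (s - 1) := by
  set v : E → ℝ := fun x => u x - m + ε * ψ x with hv_def
  have hv : ContDiff ℝ 1 v := (hu.sub contDiff_const).add (contDiff_const.mul hψ)
  have hcont : ∀ t : ℝ, 0 ≤ t → Continuous fun x => (v x)⁺ ^ t := fun t ht =>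
    (continuous_posPart_rpow ht).comp hv.continuous
  have hgrad : ∀ x, ∇ v x = ∇ u x + ε • ∇ ψ x := fun x => gradient_sub_const_add_const_mul
    (hu.differentiable one_ne_zero x) (hψ.differentiable one_ne_zero x) m ε
  have hv0 : ∀ x ∈ S \ tsupport ψ, v x ≤ 0 := fun x hx => by
    simpa [hv_def, image_eq_zero_of_notMem_tsupport hx.2] using hm x hx.1
  have hhint : IntegrableOn (fun x => h x * (v x)⁺ ^ s) S :=
    integrableOn_bilin_of_isBounded (ContinuousLinearMap.mul ℝ ℝ) H.integrableOn_rhs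
      (hcont s (by linarith)) hSb hS.measurableSet
  have hFint : IntegrableOn (fun x => s * (v x)⁺ ^ (s - 1) * ⟪F x, ∇ v x⟫) S :=
    (integrableOn_bilin_of_isBounded (innerSL ℝ) H.integrableOn_flux
      (((hcont (s - 1) (by linarith)).const_mul s).smul (continuous_gradient hv)) hSb
      hS.measurableSet).congr (ae_of_all _ fun x => real_inner_smul_right _ _ _)
  calc c * ∫ x in S, (v x)⁺ ^ s ≤ ∫ x in S, h x * (v x)⁺ ^ s := by
        rw [← integral_const_mul]
        refine integral_mono_ae
          ((integrableOn_of_continuous_of_isBounded (hcont s (by linarith)) hSb).const_mul c)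
          hhint ?_
        filter_upwards [hh] with x hx
        gcongr
    _ ≤ ∫ x in S, -(s * (v x)⁺ ^ (s - 1) * ⟪F x, ∇ v x⟫) := by
        rw [integral_neg]
        exact H.setIntegral_posPart_rpow_le hS hv hs hψc hψS hv0
    _ ≤ _ := by
        rw [← integral_const_mul]
        refine setIntegral_mono_on hFint.neg ((integrableOn_of_continuous_of_isBounded
          (hcont _ (by linarith)) hSb).const_mul _) hS.measurableSet fun x hx => ?_
        have hflux := neg_inner_add_smul_le_of_coercive hp hC₁ hC₂ hε (hcoer x hx) (hgrowth x hx)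
          (hL x)
        have hweight : 0 ≤ s * (v x)⁺ ^ (s - 1) := by positivity
        rw [hgrad]
        linarith [mul_le_mul_of_nonneg_left hflux hweight]

lemma WeakDivGE.setIntegral_posPart_rpow_le_mul_rpow (H : WeakDivGE F h S) (hS : IsOpen S)
    (hSb : Bornology.IsBounded S) (hu : ContDiff ℝ 1 u) (hp : 1 < p) (hC₁ : 0 < C₁)
    (hC₂ : 0 ≤ C₂) (hcoer : ∀ x ∈ S, C₁ * ‖∇ u x‖ ^ p ≤ ⟪F x, ∇ u x⟫)
    (hgrowth : ∀ x ∈ S, ‖F x‖ ≤ C₂ * ‖∇ u x‖ ^ (p - 1)) (hc : 0 < c)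
    (hh : ∀ᵐ x ∂volume.restrict S, c ≤ h x) (hm : ∀ x ∈ S, u x ≤ m) (hψ : ContDiff ℝ 1 ψ)
    (hψc : HasCompactSupport ψ) (hψS : tsupport ψ ⊆ S) (hL : ∀ x, ‖∇ ψ x‖ ≤ L) (hs : 1 < s)
    (hε : 0 ≤ ε) :
    ∫ x in S, (u x - m + ε * ψ x)⁺ ^ s ≤
      (2 * (s * (C₂ * L * (C₂ * L / C₁) ^ (p - 1)) / c)) ^ s * volume.real S * ε ^ (p * s) := by
  have hL₀ : 0 ≤ L := (norm_nonneg _).trans (hL 0)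
  have hSfin : IsFiniteMeasure (volume.restrict S) := ⟨by simpa using hSb.measure_lt_top⟩
  have hint : ∀ t : ℝ, 0 ≤ t → IntegrableOn (fun x => (u x - m + ε * ψ x)⁺ ^ t) S := fun t ht =>
    integrableOn_of_continuous_of_isBounded ((continuous_posPart_rpow ht).comp
      ((hu.continuous.sub continuous_const).add (continuous_const.mul hψ.continuous))) hSb
  set δ : ℝ := s * (C₂ * L * (C₂ * L / C₁) ^ (p - 1)) / c with hδ_def
  have hδ : 0 ≤ δ := by positivity
  have henergy : ∫ x in S, (u x - m + ε * ψ x)⁺ ^ s ≤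
      δ * ε ^ p * ∫ x in S, (u x - m + ε * ψ x)⁺ ^ (s - 1) := by
    refine le_of_mul_le_mul_left ((H.mul_setIntegral_posPart_rpow_le hS hSb hu hp hC₁ hC₂ hcoer
      hgrowth hh hm hψ hψc hψS hL hs hε).trans_eq ?_) hc
    rw [hδ_def]
    field_simp
  calc ∫ x in S, (u x - m + ε * ψ x)⁺ ^ s
      ≤ (2 * (δ * ε ^ p)) ^ s * (volume.restrict S).real univ :=
        integral_rpow_le_of_le_mul_integral_rpow_sub_one hs (mul_nonneg hδ (Real.rpow_nonneg hε p))
          (fun x => posPart_nonneg _) (hint s (by linarith)) (hint (s - 1) (by linarith)) henergy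
    _ = (2 * δ) ^ s * volume.real S * ε ^ (p * s) := by
        rw [← mul_assoc, Real.mul_rpow (mul_nonneg zero_le_two hδ) (Real.rpow_nonneg hε p),
          ← Real.rpow_mul hε, measureReal_restrict_apply_univ]
        ring

lemma eventually_mul_rpow_le_setIntegral_posPart_rpow (μ : Measure E) [μ.IsAddHaarMeasure]
    (hS : S ∈ 𝓝 x₀) (hSb : Bornology.IsBounded S) (hu : Continuous u)
    (hgrad : HasGradientAt u 0 x₀) (hψ : Continuous ψ) (hψ₁ : ψ =ᶠ[𝓝 x₀] 1) (hs : 0 ≤ s) :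
    ∀ᶠ ε : ℝ in 𝓝[>] 0, (1 / 2) ^ s * μ.real (ball 0 1) * ε ^ (s + Module.finrank ℝ E) ≤
      ∫ x in S, (u x - u x₀ + ε * ψ x)⁺ ^ s ∂μ := by
  have hsmall : ∀ᶠ x in 𝓝 x₀, ‖u x - u x₀‖ ≤ 1 / 2 * ‖x - x₀‖ := by
    simpa using (hasGradientAt_iff_isLittleO.1 hgrad).bound one_half_pos
  obtain ⟨d, hd, hball⟩ := Metric.eventually_nhds_iff_ball.1 (hsmall.and (hψ₁.and hS))
  filter_upwards [Ioo_mem_nhdsGT hd] with ε hε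
  have hεd : ball x₀ ε ⊆ ball x₀ d := ball_subset_ball hε.2.le
  have hint : IntegrableOn (fun x => (u x - u x₀ + ε * ψ x)⁺ ^ s) S μ :=
    integrableOn_of_continuous_of_isBounded ((continuous_posPart_rpow hs).comp (by fun_prop)) hSb
  have hsub : ball x₀ ε ⊆ S := fun x hx => (hball x (hεd hx)).2.2
  have hvol : μ.real (ball x₀ ε) = ε ^ Module.finrank ℝ E * μ.real (ball 0 1) := by
    rw [measureReal_def, Measure.addHaar_ball_of_pos _ _ hε.1, ENNReal.toReal_mul,
      ENNReal.toReal_ofReal (pow_nonneg hε.1.le _), measureReal_def]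
  calc (1 / 2) ^ s * μ.real (ball 0 1) * ε ^ (s + Module.finrank ℝ E)
      = ∫ _ in ball x₀ ε, (ε / 2) ^ s ∂μ := by
        rw [setIntegral_const, hvol, smul_eq_mul, Real.rpow_add hε.1, Real.rpow_natCast,
          div_eq_mul_one_div ε 2, Real.mul_rpow hε.1.le one_half_pos.le]
        ring
    _ ≤ ∫ x in ball x₀ ε, (u x - u x₀ + ε * ψ x)⁺ ^ s ∂μ := by
        refine setIntegral_mono_on (integrableOn_const measure_ball_lt_top.ne)
          (hint.mono_set hsub) measurableSet_ball fun x hx => ?_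
        have hux := (hball x (hεd hx)).1
        have hψx : ψ x = 1 := (hball x (hεd hx)).2.1
        have hdist : ‖x - x₀‖ < ε := mem_ball_iff_norm.1 hx
        refine Real.rpow_le_rpow (by linarith [hε.1]) ((le_trans ?_) (le_posPart _)) hs
        rw [hψx]
        linarith [(abs_le.1 hux).1]
    _ ≤ ∫ x in S, (u x - u x₀ + ε * ψ x)⁺ ^ s ∂μ :=
        setIntegral_mono_set hint (ae_of_all _ fun x => by positivity) hsub.eventuallyLE

theorem WeakDivGE.not_isMaxOn (H : WeakDivGE F h S) (hS : IsOpen S)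
    (hSb : Bornology.IsBounded S) (hu : ContDiff ℝ 1 u) (hp : 1 < p) (hC₁ : 0 < C₁)
    (hC₂ : 0 ≤ C₂) (hcoer : ∀ x ∈ S, C₁ * ‖∇ u x‖ ^ p ≤ ⟪F x, ∇ u x⟫)
    (hgrowth : ∀ x ∈ S, ‖F x‖ ≤ C₂ * ‖∇ u x‖ ^ (p - 1)) (hc : 0 < c)
    (hh : ∀ᵐ x ∂volume.restrict S, c ≤ h x) (hx₀ : x₀ ∈ S) : ¬IsMaxOn u S x₀ := by
  intro hmax
  have hS₀ : S ∈ 𝓝 x₀ := hS.mem_nhds hx₀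
  have hgrad : HasGradientAt u 0 x₀ := by
    rw [← gradient_eq_zero_of_isLocalMax (hmax.isLocalMax hS₀)]
    exact (hu.differentiable one_ne_zero x₀).hasGradientAt
  obtain ⟨ψ, hψ, hψc, hψS, hψ₁⟩ := exists_contDiff_one_eventuallyEq_one hS₀
  obtain ⟨L, hL⟩ := (hψc.fderiv ℝ).exists_bound_of_continuous (hψ.continuous_fderiv one_ne_zero)
  simp only [← norm_gradient] at hL
  -- The lower bound `ε ^ (s + n)` beats the upper bound `ε ^ (p * s)` as soon as `n < (p - 1) * s`.
  obtain ⟨s, hs, hsn⟩ : ∃ s : ℝ, 1 < s ∧ s + Module.finrank ℝ E < p * s := by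
    refine ⟨Module.finrank ℝ E / (p - 1) + 2, ?_, ?_⟩
    · linarith [div_nonneg (Module.finrank ℝ E).cast_nonneg (sub_pos.2 hp).le]
    · linarith [mul_div_cancel₀ (Module.finrank ℝ E : ℝ) (sub_pos.2 hp).ne']
  have hω : 0 < (volume : Measure E).real (ball 0 1) :=
    ENNReal.toReal_pos (measure_ball_pos _ _ one_pos).ne' measure_ball_lt_top.ne
  refine not_eventually_mul_rpow_le (mul_pos (by positivity : 0 < (1 / 2 : ℝ) ^ s) hω) hsn
    ((2 * (s * (C₂ * L * (C₂ * L / C₁) ^ (p - 1)) / c)) ^ s * volume.real S) ?_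
  filter_upwards [self_mem_nhdsWithin, eventually_mul_rpow_le_setIntegral_posPart_rpow volume hS₀
    hSb hu.continuous hgrad hψ.continuous hψ₁ (by linarith : 0 ≤ s)] with ε (hε : 0 < ε) hlower
  exact hlower.trans (H.setIntegral_posPart_rpow_le_mul_rpow hS hSb hu hp hC₁ hC₂ hcoer hgrowth hc
    hh hmax hψ hψc hψS hL hs hε.le)

end NoInteriorMax

/-! ### Solutions of the differential inequality -/

lemma exists_pos_ae_le_of_essInf_ne_zero {X : Type*} [MeasurableSpace X] {μ : Measure X}
    {q : X → ℝ} (hq₀ : ∀ x, 0 ≤ q x) (hq : essInf q μ ≠ 0) : ∃ c > 0, ∀ᵐ x ∂μ, c ≤ q x := by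
  by_contra! hcon
  refine hq ?_
  rw [essInf_eq_sSup]
  refine le_antisymm (Real.sSup_nonpos fun c hc => ?_) (Real.sSup_nonneg' ⟨0, ?_, le_rfl⟩)
  · by_contra! hc₀
    refine hcon c hc₀ ?_
    simpa [ae_iff] using hc
  · simp [(hq₀ _).not_gt]

section LocBdd

variable {n : ℕ} {b f : Euc n → ℝ}

lemma LocBdd.mul_continuous (hb : LocBdd b) (hb₀ : ∀ x, 0 ≤ b x) (hf : Continuous f) :
    LocBdd fun x => b x * f x := by
  intro K hK
  obtain ⟨C, hC⟩ := hb K hK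
  obtain ⟨D, hD⟩ := hK.exists_bound_of_continuousOn hf.continuousOn
  refine ⟨C * D, fun x hx => ?_⟩
  have hfD : f x ≤ D := (le_abs_self _).trans (hD x hx)
  have hD₀ : 0 ≤ D := (norm_nonneg _).trans (hD x hx)
  exact (mul_le_mul_of_nonneg_left hfD (hb₀ x)).trans (mul_le_mul_of_nonneg_right (hC x hx) hD₀)

lemma LocBdd.integrableOn (hb : LocBdd b) (hb₀ : ∀ x, 0 ≤ b x) (hbm : Measurable b)
    {S : Set (Euc n)} (hS : Bornology.IsBounded S) : IntegrableOn b S := by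
  obtain ⟨C, hC⟩ := hb _ hS.isCompact_closure
  refine IntegrableOn.mono_set ?_ subset_closure
  refine Measure.integrableOn_of_bounded (M := C) hS.isCompact_closure.measure_lt_top.ne
    hbm.aestronglyMeasurable ?_
  filter_upwards [ae_restrict_mem isClosed_closure.measurableSet] with x hx
  exact (Real.norm_of_nonneg (hb₀ x)).trans_le (hC x hx)

lemma exists_ball_subset_ae_le_mul_sub_mul_rpow {q f w : Euc n → ℝ} {α c : ℝ} {x₀ : Euc n}
    {Ω : Set (Euc n)} (hb : LocBdd b) (hf : Continuous f) (hf₀ : ∀ x, 0 ≤ f x) (hw : Continuous w)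
    (hw₀ : ∀ x, 0 ≤ w x) (hα : 0 < α) (hfx₀ : 0 < f x₀) (hwx₀ : w x₀ = 0) (hΩ : IsOpen Ω)
    (hx₀ : x₀ ∈ Ω) (hc : 0 < c) (hq : ∀ᵐ x ∂volume.restrict Ω, c ≤ q x) :
    ∃ ρ > 0, ball x₀ ρ ⊆ Ω ∧
      ∀ᵐ x ∂volume.restrict (ball x₀ ρ), c * f x₀ / 2 ≤ q x * f x - b x * w x ^ α := by
  obtain ⟨B, hB⟩ := hb _ (isCompact_closedBall x₀ 1)
  have hcont : Continuous fun x => c * f x - B * w x ^ α :=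
    (hf.const_mul c).sub ((hw.rpow_const fun _ => Or.inr hα.le).const_mul B)
  have hlower : ∀ᶠ x in 𝓝 x₀, c * f x₀ / 2 < c * f x - B * w x ^ α :=
    hcont.continuousAt.eventually_const_lt (by
      simp only [hwx₀, Real.zero_rpow hα.ne', mul_zero, sub_zero]
      exact half_lt_self (mul_pos hc hfx₀))
  obtain ⟨ρ, hρ, hball⟩ := Metric.eventually_nhds_iff_ball.1
    (hlower.and ((hΩ.eventually_mem hx₀).and (isOpen_ball.eventually_mem (mem_ball_self one_pos))))
  refine ⟨ρ, hρ, fun x hx => (hball x hx).2.1, ?_⟩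
  filter_upwards [ae_restrict_of_ae_restrict_of_subset (fun x hx => (hball x hx).2.1) hq,
    ae_restrict_mem measurableSet_ball] with x hqx hx
  obtain ⟨hlow, -, hxB⟩ := hball x hx
  have hbw : b x * w x ^ α ≤ B * w x ^ α :=
    mul_le_mul_of_nonneg_right (hB x (ball_subset_closedBall hxB)) (Real.rpow_nonneg (hw₀ x) α)
  linarith [mul_le_mul_of_nonneg_right hqx (hf₀ x)]

end LocBdd

section WeakSolutions

variable {n : ℕ} {A : Euc n → Euc n → Euc n} {a b u : Euc n → ℝ} {p C₁ C₂ α : ℝ}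

lemma StructCond.mul_rpow_le_inner (hA : StructCond A p C₁ C₂) (x ζ : Euc n) :
    C₁ * ‖ζ‖ ^ p ≤ ⟪A x ζ, ζ⟫ :=
  real_inner_comm ζ (A x ζ) ▸ (hA.2 x ζ).1

lemma StructCond.norm_le (hA : StructCond A p C₁ C₂) (x ζ : Euc n) :
    ‖A x ζ‖ ≤ C₂ * ‖ζ‖ ^ (p - 1) :=
  (hA.2 x ζ).2

lemma StructCond.integrableOn_flux (hA : StructCond A p C₁ C₂) (hp : 1 ≤ p)
    (hu : ContDiff ℝ 1 u) {S : Set (Euc n)} (hS : Bornology.IsBounded S) :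
    IntegrableOn (fun x => A x (∇ u x)) S := by
  have hgrad := continuous_gradient hu
  have hbound : IntegrableOn (fun x => C₂ * ‖∇ u x‖ ^ (p - 1)) S :=
    integrableOn_of_continuous_of_isBounded
      ((hgrad.norm.rpow_const fun _ => Or.inr (by linarith)).const_mul C₂) hS
  exact hbound.mono' (hA.1.comp (measurable_id.prodMk hgrad.measurable)).aestronglyMeasurable
    (ae_of_all _ fun x => hA.norm_le x _)

lemma IsWeakSol.weakDivGE (hsol : IsWeakSol A b α a univ u) (hA : StructCond A p C₁ C₂)
    (hp : 1 ≤ p) (hα : 0 ≤ α) (hb : LocBdd b) (hb₀ : ∀ x, 0 ≤ b x) (hbm : Measurable b)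
    (ha : LocBdd a) (ha₀ : ∀ x, 0 ≤ a x) (ham : Measurable a) (hu : ContDiff ℝ 1 u)
    {S : Set (Euc n)} (hS : Bornology.IsBounded S) (hSm : MeasurableSet S) :
    WeakDivGE (fun x => A x (∇ u x)) (fun x => a x - b x * ‖∇ u x‖ ^ α) S := by
  have hpow : Continuous fun x => ‖∇ u x‖ ^ α :=
    (continuous_gradient hu).norm.rpow_const fun _ => Or.inr hα
  have haint : IntegrableOn a S := ha.integrableOn ha₀ ham hS
  have hbint : IntegrableOn (fun x => b x * ‖∇ u x‖ ^ α) S :=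
    (hb.mul_continuous hb₀ hpow).integrableOn (fun x => mul_nonneg (hb₀ x) (by positivity))
      (hbm.mul hpow.measurable) hS
  refine ⟨hA.integrableOn_flux hp hu hS, haint.sub hbint, fun φ hφ hφc hφS hφ₀ => ?_⟩
  have hmul : ∀ f : Euc n → ℝ, ∫ x in univ, f x * φ x = ∫ x in S, f x * φ x := fun f => by
    rw [setIntegral_univ]
    refine (setIntegral_eq_integral_of_forall_compl_eq_zero fun x hx => ?_).symm
    rw [image_eq_zero_of_notMem_tsupport fun h => hx (hφS h), mul_zero]
  have hinner : ∫ x in univ, ⟪A x (∇ u x), ∇ φ x⟫ = ∫ x in S, ⟪A x (∇ u x), ∇ φ x⟫ := by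
    rw [setIntegral_univ]
    refine (setIntegral_eq_integral_of_forall_compl_eq_zero fun x hx => ?_).symm
    have hφx : ∇ φ x = 0 := by
      rw [← norm_eq_zero, norm_gradient, fderiv_of_notMem_tsupport ℝ fun h => hx (hφS h), norm_zero]
    rw [hφx, inner_zero_right]
  have htest := hsol φ hφ hφc (subset_univ _) hφ₀
  rw [hmul a, hmul fun x => b x * ‖∇ u x‖ ^ α, hinner] at htest
  have hmulint : ∀ {f : Euc n → ℝ}, IntegrableOn f S → IntegrableOn (fun x => f x * φ x) S :=
    fun hf => integrableOn_bilin_of_isBounded (ContinuousLinearMap.mul ℝ ℝ) hf hφ.continuous hS hSm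
  simp only [sub_mul]
  rw [integral_sub (hmulint haint) (hmulint hbint)]
  linarith

lemma IsWeakSol.le_of_forall_sphere_le (hsol : IsWeakSol A b α a univ u) (hn : 2 ≤ n)
    (hA : StructCond A p C₁ C₂) (hp : 1 < p) (hC₁ : 0 < C₁) (hα : p - 1 ≤ α) (hb : LocBdd b)
    (hb₀ : ∀ x, 0 ≤ b x) (hbm : Measurable b) (ha : LocBdd a) (ha₀ : ∀ x, 0 ≤ a x)
    (ham : Measurable a) (hu : ContDiff ℝ 1 u) {r m : ℝ} (hm : ∀ x ∈ sphere 0 r, u x ≤ m)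
    {x : Euc n} (hx : x ∈ closedBall 0 r) : u x ≤ m := by
  rw [← ball_union_sphere] at hx
  refine hx.elim (fun hxball => ?_) (hm x)
  have hpow : Continuous fun x => ‖∇ u x‖ ^ (α - (p - 1)) :=
    (continuous_gradient hu).norm.rpow_const fun _ => Or.inr (by linarith)
  obtain ⟨B, hB⟩ := hb.mul_continuous hb₀ hpow _ (isCompact_closedBall 0 r)
  have hB₀ : 0 ≤ B :=
    (mul_nonneg (hb₀ x) (by positivity)).trans (hB x (ball_subset_closedBall hxball))
  have hdiv := hsol.weakDivGE hA hp.le (by linarith) hb hb₀ hbm ha ha₀ ham hu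
    (isBounded_ball (x := 0) (r := r)) measurableSet_ball
  refine hdiv.le_of_forall_frontier_le (by simpa using hn) isOpen_ball isBounded_ball hu hp hC₁ hB₀
    (fun y _ => hA.mul_rpow_le_inner y _) (fun y hy => ?_)
    (fun y hy => hm y (frontier_ball_subset_sphere hy)) hxball
  have hlower : b y * ‖∇ u y‖ ^ α ≤ B * ‖∇ u y‖ ^ (p - 1) :=
    calc b y * ‖∇ u y‖ ^ α = b y * ‖∇ u y‖ ^ (α - (p - 1)) * ‖∇ u y‖ ^ (p - 1) := by
          rw [mul_assoc, ← Real.rpow_add_of_nonneg (norm_nonneg _) (by linarith) (by linarith),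
            sub_add_cancel]
      _ ≤ B * ‖∇ u y‖ ^ (p - 1) := by
          gcongr
          exact hB y (ball_subset_closedBall hy)
  linarith [ha₀ y]

end WeakSolutions

section SphereMaxima

variable {n : ℕ} {u : Euc n → ℝ} {r r₁ r₂ : ℝ}

lemma le_sphMax (hu : Continuous u) {x : Euc n} (hx : x ∈ sphere 0 r) : u x ≤ sphMax u r :=
  le_csSup ((isCompact_sphere _ _).bddAbove_image hu.continuousOn) (mem_image_of_mem _ hx)

lemma exists_mem_sphere_eq_sphMax (hn : n ≠ 0) (hu : Continuous u) (hr : 0 ≤ r) :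
    ∃ x ∈ sphere 0 r, u x = sphMax u r := by
  have : NeZero n := ⟨hn⟩
  obtain ⟨x, hx, hmax⟩ := (isCompact_sphere (0 : Euc n) r).exists_sSup_image_eq
    (NormedSpace.sphere_nonempty.2 hr) hu.continuousOn
  exact ⟨x, hx, hmax.symm⟩

lemma isOpen_Ann (n : ℕ) (r₁ r₂ : ℝ) : IsOpen (Ann n r₁ r₂) :=
  (isOpen_lt continuous_const continuous_norm).inter (isOpen_lt continuous_norm continuous_const)

lemma exists_isMaxOn_Ann (hn : n ≠ 0) (hu : Continuous u) (hr₁ : 0 ≤ r₁) (hr : r₁ < r₂)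
    (hball : ∀ r, ∀ x ∈ closedBall 0 r, u x ≤ sphMax u r) (hM : sphMax u r₁ = sphMax u r₂) :
    ∃ x₀ ∈ Ann n r₁ r₂, u x₀ = sphMax u r₂ ∧ IsMaxOn u (Ann n r₁ r₂) x₀ := by
  obtain ⟨x₁, hx₁, hux₁⟩ := exists_mem_sphere_eq_sphMax hn hu hr₁
  obtain ⟨r, hr₁r, hrr₂⟩ := exists_between hr
  obtain ⟨x₀, hx₀, hux₀⟩ := exists_mem_sphere_eq_sphMax hn hu (hr₁.trans hr₁r.le)
  have hle : ∀ x ∈ Ann n r₁ r₂, u x ≤ sphMax u r₂ := fun x hx =>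
    hball r₂ x (mem_closedBall_zero_iff.2 hx.2.le)
  rw [mem_sphere_zero_iff_norm] at hx₀
  have hx₀A : x₀ ∈ Ann n r₁ r₂ := ⟨hr₁r.trans_eq hx₀.symm, hx₀.trans_lt hrr₂⟩
  have hmax : u x₀ = sphMax u r₂ := by
    refine (hle x₀ hx₀A).antisymm ?_
    rw [← hM, ← hux₁, hux₀]
    exact hball r x₁ (closedBall_subset_closedBall hr₁r.le (sphere_subset_closedBall hx₁))
  exact ⟨x₀, hx₀A, hmax, fun x hx => (hle x hx).trans_eq hmax.symm⟩

end SphereMaxima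

theorem stmt_3_general (n : ℕ) (hn : 2 ≤ n) (p C₁ C₂ α : ℝ) (hp : 1 < p)
    (hC₁ : 0 < C₁) (hC₂ : 0 < C₂) (hα₁ : p - 1 ≤ α)
    (A : Euc n → Euc n → Euc n) (hA : StructCond A p C₁ C₂)
    (b : Euc n → ℝ) (hbm : Measurable b) (hb0 : ∀ x, 0 ≤ b x) (hbloc : LocBdd b)
    (q : Euc n → ℝ) (hqm : Measurable q) (hq0 : ∀ x, 0 ≤ q x) (hqloc : LocBdd q)
    (g : ℝ → ℝ) (hg : ContinuousOn g (Set.Ici 0)) (hg0 : ∀ t ∈ Set.Ici (0 : ℝ), 0 ≤ g t)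
    (hgpos : ∀ t : ℝ, 0 < t → 0 < g t)
    (u : Euc n → ℝ) (hu : ContDiff ℝ 1 u) (hu0 : ∀ x, 0 ≤ u x)
    (hsol : IsWeakSol A b α (fun x => q x * g (u x)) Set.univ u)
    (r₁ r₂ : ℝ) (hr₁ : 0 < r₁) (hr : r₁ < r₂)
    (hM : sphMax u r₁ = sphMax u r₂) (hMpos : 0 < sphMax u r₂) :
    essInf q (volume.restrict (Ann n r₁ r₂)) = 0 := by
  have hgu : Continuous fun x => g (u x) := hg.comp_continuous hu.continuous hu0
  have hgu₀ : ∀ x, 0 ≤ g (u x) := fun x => hg0 _ (hu0 x)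
  have ha : LocBdd fun x => q x * g (u x) := hqloc.mul_continuous hq0 hgu
  have ha₀ : ∀ x, 0 ≤ q x * g (u x) := fun x => mul_nonneg (hq0 x) (hgu₀ x)
  have ham : Measurable fun x => q x * g (u x) := hqm.mul hgu.measurable
  have hball : ∀ r, ∀ x ∈ closedBall 0 r, u x ≤ sphMax u r := fun r x hx =>
    hsol.le_of_forall_sphere_le hn hA hp hC₁ hα₁ hbloc hb0 hbm ha ha₀ ham hu
      (fun y hy => le_sphMax hu.continuous hy) hx
  obtain ⟨x₀, hx₀, hux₀, hmax⟩ :=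
    exists_isMaxOn_Ann (by omega) hu.continuous hr₁.le hr hball hM
  by_contra hne
  obtain ⟨c, hc, hqc⟩ := exists_pos_ae_le_of_essInf_ne_zero hq0 hne
  have hgx₀ : 0 < g (u x₀) := hgpos _ (hux₀ ▸ hMpos)
  have hgrad : ∇ u x₀ = 0 :=
    gradient_eq_zero_of_isLocalMax (hmax.isLocalMax ((isOpen_Ann n r₁ r₂).mem_nhds hx₀))
  obtain ⟨ρ, hρ, hρA, hlower⟩ := exists_ball_subset_ae_le_mul_sub_mul_rpow hbloc hgu hgu₀
    (continuous_gradient hu).norm (fun _ => norm_nonneg _) (by linarith : 0 < α) hgx₀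
    (norm_eq_zero.2 hgrad) (isOpen_Ann n r₁ r₂) hx₀ hc hqc
  exact (hsol.weakDivGE hA hp.le (by linarith) hbloc hb0 hbm ha ha₀ ham hu isBounded_ball
    measurableSet_ball).not_isMaxOn isOpen_ball isBounded_ball hu hp hC₁ hC₂.le
    (fun x _ => hA.mul_rpow_le_inner x _) (fun x _ => hA.norm_le x _)
    (half_pos (mul_pos hc hgx₀)) hlower (mem_ball_self hρ) (hmax.on_subset hρA)

/-- Lemma 3.0: if `M(r₁;u) = M(r₂;u) > 0` then `ess inf_{r₁<|x|<r₂} q = 0`. -/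
theorem stmt_3 (n : ℕ) (hn : 2 ≤ n) (p C₁ C₂ α : ℝ) (hp : 1 < p)
    (hC₁ : 0 < C₁) (hC₂ : 0 < C₂) (hα₁ : p - 1 ≤ α) (hα₂ : α ≤ p)
    (A : Euc n → Euc n → Euc n) (hA : StructCond A p C₁ C₂)
    (b : Euc n → ℝ) (hbm : Measurable b) (hb0 : ∀ x, 0 ≤ b x) (hbloc : LocBdd b)
    (q : Euc n → ℝ) (hqm : Measurable q) (hq0 : ∀ x, 0 ≤ q x) (hqloc : LocBdd q)
    (g : ℝ → ℝ) (hg : ContinuousOn g (Set.Ici 0)) (hg0 : ∀ t ∈ Set.Ici (0 : ℝ), 0 ≤ g t)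
    (hgpos : ∀ t : ℝ, 0 < t → 0 < g t)
    (u : Euc n → ℝ) (hu : ContDiff ℝ 1 u) (hu0 : ∀ x, 0 ≤ u x)
    (hsol : IsWeakSol A b α (fun x => q x * g (u x)) Set.univ u)
    (r₁ r₂ : ℝ) (hr₁ : 0 < r₁) (hr : r₁ < r₂)
    (hM : sphMax u r₁ = sphMax u r₂) (hMpos : 0 < sphMax u r₂) :
    essInf q (volume.restrict (Ann n r₁ r₂)) = 0 :=
  stmt_3_general n hn p C₁ C₂ α hp hC₁ hC₂ hα₁ A hA b hbm hb0 hbloc q hqm hq0 hqloc g hg hg0 hgpos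
    u hu hu0 hsol r₁ r₂ hr₁ hr hM hMpos
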